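/- arXiv:2207.00105 — 2 statements merged into one kernel-verified Lean document; each statement's English description precedes it below -/
import Mathlib

section
/- Let F be a field with |F| > 2 and let m ≥ 3 be an integer. Then there exists a tiling (U, V) of F^{2m} such that U is projective, both U and V are full-rank (their affine spans equal F^{2m}), and both U and V are aperiodic (per(U) = per(V) = {0}). Moreover, if F is finite, U and V can be chosen with |U| = |V| = |F|^m. -/
/-- `(U, V)` is a tiling of the ambient space `S`: every element of `S` is uniquely
represented as the sum of an element of `U` and an element of `V`. -/
def IsTiling {S : Type*} [AddCommGroup S] (U V : Set S) : Prop :=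
  ∀ s : S, ∃! p : S × S, p.1 ∈ U ∧ p.2 ∈ V ∧ p.1 + p.2 = s

/-- `U` is projective: `F·U = U`, i.e. `U` is closed under scalar multiplication. -/
def IsProjective (F : Type*) {S : Type*} [Field F] [AddCommGroup S] [Module F S]
    (U : Set S) : Prop :=
  ∀ (a : F) ⦃u : S⦄, u ∈ U → a • u ∈ U

/-- The set of periods of `X`: vectors `w` with `X + w = X`. -/
def periods {S : Type*} [AddCommGroup S] (X : Set S) : Set S :=
  {w | (fun v => v + w) '' X = X}

/-!
Split the space as `A × A` and tile it by a graph `U = {(x, f x)}` and a transposed graph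
`V = {(g y, y)}`. A point `(s, t)` is a sum of the two exactly when `x + g (t - f x) = s` for some
`x`, and this is uniquely solvable as soon as moving `x` by `± (g (y + f x) - g y)` never changes
`f x`.

Take `A = ι →₀ F` and let `g` be the coordinatewise indicator of `≠ 0`, so that
`g (y + d) - g y` is supported where `d` is. It then suffices that `f` is invariant under changes of
`x` supported where `f x` is. For a permutation `σ` of `ι` without cycles of length one or two, let
`f` send `c e_i + d e_{σ i}` with `d ≠ 0` to `d e_i`, and every other vector to `0`: changing `x` on
the support `{i}` of `f x` only alters `c`. This `f` is homogeneous, and both `f` and `g` are far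
enough from linear for the two graphs to be full-rank and aperiodic.
-/

open Set
open Finsupp (single)

section Transport

theorem IsTiling.image {S T : Type*} [AddCommGroup S] [AddCommGroup T] {U V : Set S}
    (h : IsTiling U V) (e : S ≃+ T) : IsTiling (e '' U) (e '' V) := by
  intro t
  obtain ⟨⟨u, v⟩, ⟨hu, hv, huv⟩, huniq⟩ := h (e.symm t)
  refine ⟨(e u, e v), ⟨mem_image_of_mem e hu, mem_image_of_mem e hv, ?_⟩, ?_⟩
  · rw [← map_add, huv, e.apply_symm_apply]
  · rintro ⟨_, _⟩ ⟨⟨u', hu', rfl⟩, ⟨v', hv', rfl⟩, h'⟩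
    obtain ⟨rfl, rfl⟩ := Prod.mk.inj (huniq (u', v') ⟨hu', hv', by rw [← h', ← map_add]; simp⟩)
    rfl

theorem IsProjective.image {F S T : Type*} [Field F] [AddCommGroup S] [AddCommGroup T]
    [Module F S] [Module F T] {U : Set S} (h : IsProjective F U) (e : S →ₗ[F] T) :
    IsProjective F (e '' U) := by
  rintro a _ ⟨u, hu, rfl⟩
  exact ⟨a • u, h a hu, map_smul e a u⟩

theorem periods_image {S T : Type*} [AddCommGroup S] [AddCommGroup T] (e : S ≃+ T) (X : Set S) :
    periods (e '' X) = e '' periods X := by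
  ext t
  obtain ⟨w, rfl⟩ := e.surjective t
  have hcomm : (fun v => v + e w) '' (e '' X) = e '' ((fun v => v + w) '' X) := by
    simp only [image_image, map_add]
  rw [e.injective.mem_set_image]
  change _ = _ ↔ _ = _
  rw [hcomm, e.injective.image_injective.eq_iff]

theorem periods_image_eq_singleton_zero {S T : Type*} [AddCommGroup S] [AddCommGroup T]
    {X : Set S} (h : periods X = {0}) (e : S ≃+ T) : periods (e '' X) = {0} := by
  rw [periods_image, h, image_singleton, map_zero]

end Transport

section Graph

variable {A B : Type*} [AddCommGroup A] [AddCommGroup B]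

theorem isTiling_graphOn_image_swap_graphOn {f : A → B} {g : B → A}
    (hadd : ∀ x y, f (x + (g (y + f x) - g y)) = f x)
    (hsub : ∀ x y, f (x - (g (y + f x) - g y)) = f x) :
    IsTiling (univ.graphOn f) (Prod.swap '' univ.graphOn g) := by
  rintro ⟨s, t⟩
  -- The value `f x` at the solution `x` is `f (s - g t)`, which determines `y`, hence `x`.
  have hexists : f (s - g (t - f (s - g t))) = f (s - g t) := by
    simpa using hadd (s - g t) (t - f (s - g t))
  refine ⟨((s - g (t - f (s - g t)), f (s - g t)), (g (t - f (s - g t)), t - f (s - g t))),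
    by simp [hexists], ?_⟩
  rintro ⟨⟨x, z⟩, ⟨w, y⟩⟩ ⟨hx, hy, hxy⟩
  obtain rfl : f x = z := by simpa using hx
  obtain rfl : g y = w := by simpa using hy
  obtain ⟨rfl, rfl⟩ : x + g y = s ∧ f x + y = t := by simpa using hxy
  have hunique : f (x + g y - g (f x + y)) = f x := by
    rw [add_comm (f x), add_sub_assoc, ← neg_sub, ← sub_eq_add_neg, hsub]
  simp [hunique]

theorem nonempty_graphOn_univ_equiv {α β : Type*} (f : α → β) :
    Nonempty (univ.graphOn f ≃ α) := by
  rw [graphOn_univ_eq_range]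
  exact ⟨(Equiv.ofInjective _ fun _ _ h => (Prod.mk.inj h).1).symm⟩

theorem isProjective_graphOn {F : Type*} [Field F] [Module F A] [Module F B] {f : A → B}
    (hf : ∀ (a : F) (x : A), f (a • x) = a • f x) : IsProjective F (univ.graphOn f) := by
  rintro a ⟨x, y⟩ hxy
  obtain rfl : f x = y := by simpa using hxy
  simp [hf]

theorem apply_add_of_mem_periods_graphOn {f : A → B} {p : A × B}
    (hp : p ∈ periods (univ.graphOn f)) (x : A) : f (x + p.1) = f x + p.2 := by
  have hmem : (x, f x) + p ∈ univ.graphOn f := by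
    rw [← show (fun v => v + p) '' univ.graphOn f = univ.graphOn f from hp]
    exact mem_image_of_mem _ (by simp)
  simpa using hmem

theorem periods_graphOn_eq_singleton_zero {f : A → B}
    (hf : ∀ w v, (∀ x, f (x + w) = f x + v) → w = 0) : periods (univ.graphOn f) = {0} := by
  refine eq_singleton_iff_unique_mem.2 ⟨by simp [periods], fun p hp => ?_⟩
  have hshift := apply_add_of_mem_periods_graphOn hp
  have hfst : p.1 = 0 := hf p.1 p.2 hshift
  have hsnd : p.2 = 0 := by simpa [hfst] using hshift 0
  exact Prod.ext hfst hsnd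

theorem sub_mem_vectorSpan_graphOn (R : Type*) [Ring R] [Module R A] [Module R B] (f : A → B)
    (x y : A) : (x - y, f x - f y) ∈ vectorSpan R (univ.graphOn f) := by
  have hmem (z : A) : (z, f z) ∈ univ.graphOn f := by simp
  simpa using vsub_mem_vectorSpan R (hmem x) (hmem y)

end Graph

theorem affineSpan_eq_top_of_single_mem_vectorSpan {R ι κ : Type*} [Ring R]
    {X : Set ((ι →₀ R) × (κ →₀ R))} (hX : X.Nonempty)
    (hι : ∀ i, (single i 1, 0) ∈ vectorSpan R X)
    (hκ : ∀ k, (0, single k 1) ∈ vectorSpan R X) : affineSpan R X = ⊤ := by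
  rw [AffineSubspace.affineSpan_eq_top_iff_vectorSpan_eq_top_of_nonempty R _ _ hX, eq_top_iff,
    ← (Finsupp.basisSingleOne.prod Finsupp.basisSingleOne).span_eq, Submodule.span_le]
  rintro _ ⟨i | k, rfl⟩
  · simpa [Module.Basis.prod_apply] using hι i
  · simpa [Module.Basis.prod_apply] using hκ k

section EdgeShift

variable {ι M : Type*}

open Classical in
/-- The map whose graph is the projective tile. When `σ` has no cycles of length one or two, it
sends `c e_i + d e_{σ i}` with `d ≠ 0` to `d e_i`, and every vector not of this form to `0`. -/
noncomputable def edgeShift [Zero M] (σ : Equiv.Perm ι) (x : ι →₀ M) : ι →₀ M :=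
  (x.equivMapDomain σ.symm).filter fun i => (x.support : Set ι) ⊆ {i, σ i}

variable {σ : Equiv.Perm ι}

open Classical in
theorem edgeShift_apply [Zero M] (x : ι →₀ M) (i : ι) :
    edgeShift σ x i = if (x.support : Set ι) ⊆ {i, σ i} then x (σ i) else 0 :=
  Finsupp.filter_apply _ _ _

theorem edgeShift_zero [Zero M] : edgeShift σ (0 : ι →₀ M) = 0 := by
  ext i
  simp [edgeShift_apply]

theorem edgeShift_smul {R : Type*} [Ring R] [IsDomain R] [AddCommGroup M] [Module R M]
    [Module.IsTorsionFree R M] (a : R) (x : ι →₀ M) :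
    edgeShift σ (a • x) = a • edgeShift σ x := by
  obtain rfl | ha := eq_or_ne a 0
  · rw [zero_smul, zero_smul, edgeShift_zero]
  · ext i
    rw [Finsupp.smul_apply, edgeShift_apply, edgeShift_apply, Finsupp.support_smul_eq ha,
      smul_ite, smul_zero, Finsupp.smul_apply]

theorem support_subset_of_edgeShift_apply_ne_zero [Zero M] {x : ι →₀ M} {i : ι}
    (h : edgeShift σ x i ≠ 0) : (x.support : Set ι) ⊆ {i, σ i} := by
  by_contra hx
  exact h ((edgeShift_apply x i).trans (if_neg hx))

theorem edgeShift_single_apply [Zero M] (i : ι) (c : M) :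
    edgeShift σ (single (σ i) c) i = c := by
  have hsupp : ((single (σ i) c).support : Set ι) ⊆ {i, σ i} := by
    grw [Finsupp.support_single_subset]
    simp
  simp [edgeShift_apply, hsupp]

theorem exists_eq_single_add_single_of_edgeShift_ne_zero [AddCommMonoid M]
    (hσ : ∀ i, σ i ≠ i) {x : ι →₀ M} (h : edgeShift σ x ≠ 0) :
    ∃ (i : ι) (c d : M), d ≠ 0 ∧ x = single i c + single (σ i) d := by
  classical
  obtain ⟨i, hi⟩ := Finsupp.ne_iff.1 h
  have hsupp := support_subset_of_edgeShift_apply_ne_zero hi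
  refine ⟨i, x i, x (σ i), by simpa [edgeShift_apply, hsupp] using hi, ?_⟩
  ext k
  have hk : x k ≠ 0 → k = i ∨ k = σ i := fun hk => hsupp (by simpa using hk)
  have hσi : σ i ≠ i := hσ i
  simp only [Finsupp.add_apply, Finsupp.single_apply]
  grind

theorem edgeShift_single_add_single [AddCommMonoid M] (hσ : ∀ i, σ i ≠ i)
    (hσσ : ∀ i, σ (σ i) ≠ i) (i : ι) (c : M) {d : M} (hd : d ≠ 0) :
    edgeShift σ (single i c + single (σ i) d) = single i d := by
  classical
  set x := single i c + single (σ i) d with hx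
  have hxσ : x (σ i) = d := by simp [hx, hσ]
  have hx0 : ∀ j, j ≠ i → j ≠ σ i → x j = 0 := fun j hi hj => by simp [hx, hi, hj]
  have hsupp : (x.support : Set ι) ⊆ {i, σ i} := fun j hj => by
    by_contra hne
    obtain ⟨hji, hjσ⟩ := not_or.1 hne
    exact Finsupp.mem_support_iff.1 hj (hx0 j hji hjσ)
  ext k
  obtain rfl | hk := eq_or_ne k i
  · simp [edgeShift_apply, hsupp, hxσ]
  · rw [Finsupp.single_eq_of_ne hk]
    by_contra hne
    have hedge : σ i = k ∨ σ i = σ k :=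
      support_subset_of_edgeShift_apply_ne_zero hne (by simpa [hxσ] using hd)
    have hki : σ k ≠ i := by
      rintro rfl
      exact hedge.elim (hσσ k) fun h => hσ k (σ.injective h)
    have hσk : x (σ k) = 0 := hx0 _ hki (σ.injective.ne hk)
    exact hne (by simp [edgeShift_apply, hσk])

theorem edgeShift_add_of_support_subset [AddCommMonoid M] (hσ : ∀ i, σ i ≠ i)
    (hσσ : ∀ i, σ (σ i) ≠ i) {x z : ι →₀ M} (hz : z.support ⊆ (edgeShift σ x).support) :
    edgeShift σ (x + z) = edgeShift σ x := by
  by_cases hx : edgeShift σ x = 0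
  · obtain rfl : z = 0 := by simpa [hx] using hz
    rw [add_zero]
  · obtain ⟨i, c, d, hd, rfl⟩ := exists_eq_single_add_single_of_edgeShift_ne_zero hσ hx
    rw [edgeShift_single_add_single hσ hσσ i c hd, Finsupp.support_single i hd,
      Finsupp.support_subset_singleton'] at hz
    obtain ⟨b, rfl⟩ := hz
    rw [add_right_comm, ← Finsupp.single_add, edgeShift_single_add_single hσ hσσ i _ hd,
      edgeShift_single_add_single hσ hσσ i _ hd]

theorem eq_zero_of_edgeShift_add [AddCommGroup M] [Nontrivial M] (hσ : ∀ i, σ i ≠ i)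
    (hσσ : ∀ i, σ (σ i) ≠ i) {w v : ι →₀ M}
    (h : ∀ x, edgeShift σ (x + w) = edgeShift σ x + v) : w = 0 := by
  have hw : ∀ i k, k ≠ i → k ≠ σ i → w k = 0 := by
    intro i k hki hkσ
    obtain ⟨c, hc⟩ := exists_ne (-v i)
    have hne : edgeShift σ (single (σ i) c + w) i ≠ 0 := by
      rw [h, Finsupp.add_apply, edgeShift_single_apply]
      exact fun h0 => hc (eq_neg_of_add_eq_zero_left h0)
    by_contra hwk
    have hk : k = i ∨ k = σ i :=
      support_subset_of_edgeShift_apply_ne_zero hne (by simpa [hkσ] using hwk)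
    exact hk.elim hki hkσ
  ext k
  obtain ⟨j, rfl⟩ := σ.surjective k
  obtain ⟨i, rfl⟩ := σ.surjective j
  exact hw i _ (hσσ i) (hσ (σ i))

theorem affineSpan_graphOn_edgeShift_eq_top (R : Type*) [Ring R] [Nontrivial R]
    (hσ : ∀ i, σ i ≠ i) (hσσ : ∀ i, σ (σ i) ≠ i) :
    affineSpan R (univ.graphOn (edgeShift σ : (ι →₀ R) → ι →₀ R)) = ⊤ := by
  set D := vectorSpan R (univ.graphOn (edgeShift σ : (ι →₀ R) → ι →₀ R))
  have hshift (i : ι) (c : R) :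
      edgeShift σ (single i c + single (σ i) 1) = single i 1 :=
    edgeShift_single_add_single hσ hσσ i c one_ne_zero
  have hfst (i : ι) : (single i 1, 0) ∈ D := by
    have h := sub_mem_vectorSpan_graphOn R (edgeShift σ)
      (single i (1 : R) + single (σ i) 1) (single i (0 : R) + single (σ i) 1)
    rw [hshift, hshift] at h
    simpa using h
  refine affineSpan_eq_top_of_single_mem_vectorSpan (by simp) hfst fun i => ?_
  have hedge : (single (σ i) 1, single i 1) ∈ D := by
    have h := sub_mem_vectorSpan_graphOn R (edgeShift σ)
      (single i (0 : R) + single (σ i) 1) 0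
    rw [hshift, edgeShift_zero] at h
    simpa using h
  simpa using D.sub_mem hedge (hfst (σ i))

end EdgeShift

section SupportIndicator

variable {ι M R : Type*}

open Classical in
/-- The map whose transposed graph is the second tile: the finitely supported function with value
`1` on the support of `y` and `0` elsewhere. -/
noncomputable def supportIndicator (R : Type*) [Zero M] [Zero R] [One R] (y : ι →₀ M) : ι →₀ R :=
  y.mapRange (fun c => if c = 0 then 0 else 1) (by simp)

open Classical in
theorem supportIndicator_apply [Zero M] [Zero R] [One R] (y : ι →₀ M) (i : ι) :
    supportIndicator R y i = if y i = 0 then 0 else 1 := by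
  simp [supportIndicator]

theorem supportIndicator_zero [Zero M] [Zero R] [One R] :
    supportIndicator R (0 : ι →₀ M) = 0 :=
  Finsupp.mapRange_zero

theorem supportIndicator_single [Zero M] [Zero R] [One R] (i : ι) {c : M} (hc : c ≠ 0) :
    supportIndicator R (single i c) = single i 1 := by
  simp [supportIndicator, hc]

theorem support_supportIndicator_add_sub_subset [AddMonoid M] [Ring R] (y z : ι →₀ M) :
    (supportIndicator R (y + z) - supportIndicator R y).support ⊆ z.support := by
  intro i hi
  contrapose! hi
  have hyz : (y + z) i = y i := by
    rw [Finsupp.add_apply, Finsupp.notMem_support_iff.1 hi, add_zero]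
  rw [Finsupp.notMem_support_iff, Finsupp.sub_apply, supportIndicator_apply,
    supportIndicator_apply, hyz, sub_self]

theorem eq_zero_of_supportIndicator_add [AddGroup M] [Ring R] [Nontrivial R]
    (hM : ∀ b : M, ∃ c : M, c ≠ 0 ∧ c ≠ b) {w : ι →₀ M} {v : ι →₀ R}
    (h : ∀ y, supportIndicator R (y + w) = supportIndicator R y + v) : w = 0 := by
  by_contra hw
  obtain ⟨i, hi⟩ : ∃ i, w i ≠ 0 := Finsupp.ne_iff.1 hw
  have hv : v i = 1 := by
    simpa [supportIndicator_apply, hi] using (DFunLike.congr_fun (h 0) i).symm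
  obtain ⟨c, hc, hcw⟩ := hM (-w i)
  have hcw' : c + w i ≠ 0 := fun h0 => hcw (eq_neg_of_add_eq_zero_left h0)
  simpa [supportIndicator_apply, hc, hcw', hv] using DFunLike.congr_fun (h (single i c)) i

theorem affineSpan_graphOn_supportIndicator_eq_top {F : Type*} [DivisionRing F]
    (hF : ∃ a : F, a ≠ 0 ∧ a ≠ 1) :
    affineSpan F (univ.graphOn (supportIndicator F : (ι →₀ F) → ι →₀ F)) = ⊤ := by
  set D := vectorSpan F (univ.graphOn (supportIndicator F : (ι →₀ F) → ι →₀ F))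
  obtain ⟨a, ha0, ha1⟩ := hF
  have hsnd (i : ι) : (single i 1, 0) ∈ D := by
    have h := sub_mem_vectorSpan_graphOn F (supportIndicator F) (single i a) (single i 1)
    rw [supportIndicator_single i ha0, supportIndicator_single i one_ne_zero, sub_self,
      ← Finsupp.single_sub] at h
    simpa [-Finsupp.single_sub, inv_mul_cancel₀ (sub_ne_zero.2 ha1)] using D.smul_mem (a - 1)⁻¹ h
  refine affineSpan_eq_top_of_single_mem_vectorSpan (by simp) hsnd fun i => ?_
  have hdiag : (single i 1, single i 1) ∈ D := by
    simpa [supportIndicator_single, supportIndicator_zero] using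
      sub_mem_vectorSpan_graphOn F (supportIndicator F) (single i (1 : F)) 0
  simpa using D.sub_mem hdiag (hsnd i)

end SupportIndicator

theorem isTiling_graphOn_edgeShift_supportIndicator {ι R : Type*} [Ring R] {σ : Equiv.Perm ι}
    (hσ : ∀ i, σ i ≠ i) (hσσ : ∀ i, σ (σ i) ≠ i) :
    IsTiling (univ.graphOn (edgeShift σ : (ι →₀ R) → ι →₀ R))
      (Prod.swap '' univ.graphOn (supportIndicator R)) := by
  refine isTiling_graphOn_image_swap_graphOn (fun x y => ?_) fun x y => ?_
  · exact edgeShift_add_of_support_subset hσ hσσ (support_supportIndicator_add_sub_subset _ _)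
  · rw [sub_eq_add_neg]
    refine edgeShift_add_of_support_subset hσ hσσ ?_
    rw [Finsupp.support_neg]
    exact support_supportIndicator_add_sub_subset _ _

theorem exists_ne_zero_and_ne {R : Type*} [Zero R] [One R] [NeZero (1 : R)]
    (hR : ∃ a : R, a ≠ 0 ∧ a ≠ 1) (b : R) : ∃ c : R, c ≠ 0 ∧ c ≠ b := by
  obtain rfl | hb := eq_or_ne b 1
  · exact hR
  · exact ⟨1, one_ne_zero, hb.symm⟩

theorem exists_perm_forall_apply_ne_and_apply_apply_ne {ι : Type*} (hι : 3 ≤ ENat.card ι) :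
    ∃ σ : Equiv.Perm ι, (∀ i, σ i ≠ i) ∧ ∀ i, σ (σ i) ≠ i := by
  obtain hfin | hinf := finite_or_infinite ι
  · obtain ⟨n, hn⟩ : ∃ n, Nat.card ι = n + 3 :=
      Nat.exists_eq_add_of_le' (by simpa [ENat.card_eq_coe_natCard] using hι)
    let e : ι ≃ Fin (n + 3) := Finite.equivFinOfCardEq hn
    have hadd₂ (k : Fin (n + 3)) : k + 1 + 1 ≠ k := by
      rw [add_assoc, Ne, add_eq_left]
      simp [Fin.ext_iff, Fin.val_add, Nat.mod_eq_of_lt]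
    exact ⟨e.symm.permCongr (Equiv.addRight 1), by simp [Equiv.symm_apply_eq],
      by simp [Equiv.symm_apply_eq, hadd₂]⟩
  · obtain ⟨e⟩ : Nonempty (ι ≃ ι × ℤ) := Cardinal.eq.1 (by simp)
    exact ⟨e.symm.permCongr ((Equiv.refl ι).prodCongr (Equiv.addRight 1)),
      by simp [Equiv.symm_apply_eq, Prod.ext_iff],
      by simp [Equiv.symm_apply_eq, Prod.ext_iff, add_assoc]⟩

theorem statement4_general {F S ι : Type*} [Field F] [AddCommGroup S] [Module F S]
    (hF : ∃ a : F, a ≠ 0 ∧ a ≠ 1) (b : Module.Basis (ι ⊕ ι) F S) (hι : 3 ≤ ENat.card ι) :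
    ∃ U V : Set S,
      IsTiling U V ∧
      IsProjective F U ∧
      affineSpan F U = ⊤ ∧ affineSpan F V = ⊤ ∧
      periods U = {0} ∧ periods V = {0} ∧
      Nonempty (U ≃ (ι →₀ F)) ∧ Nonempty (V ≃ (ι →₀ F)) := by
  obtain ⟨σ, hσ, hσσ⟩ := exists_perm_forall_apply_ne_and_apply_apply_ne hι
  let e : ((ι →₀ F) × (ι →₀ F)) ≃ₗ[F] S :=
    (Finsupp.sumFinsuppLEquivProdFinsupp F).symm ≪≫ₗ b.repr.symm
  let swap : ((ι →₀ F) × (ι →₀ F)) ≃ₗ[F] ((ι →₀ F) × (ι →₀ F)) := LinearEquiv.prodComm F _ _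
  have hU : periods (univ.graphOn (edgeShift σ : (ι →₀ F) → ι →₀ F)) = {0} :=
    periods_graphOn_eq_singleton_zero fun _ _ => eq_zero_of_edgeShift_add hσ hσσ
  have hV : periods (univ.graphOn (supportIndicator F : (ι →₀ F) → ι →₀ F)) = {0} :=
    periods_graphOn_eq_singleton_zero fun _ _ =>
      eq_zero_of_supportIndicator_add (exists_ne_zero_and_ne hF)
  refine ⟨e '' univ.graphOn (edgeShift σ), e '' (swap '' univ.graphOn (supportIndicator F)),
    (isTiling_graphOn_edgeShift_supportIndicator hσ hσσ).image e.toAddEquiv,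
    (isProjective_graphOn edgeShift_smul).image e.toLinearMap,
    e.toAffineEquiv.span_eq_top_iff.1 (affineSpan_graphOn_edgeShift_eq_top F hσ hσσ),
    e.toAffineEquiv.span_eq_top_iff.1 (swap.toAffineEquiv.span_eq_top_iff.1
      (affineSpan_graphOn_supportIndicator_eq_top hF)),
    periods_image_eq_singleton_zero hU e.toAddEquiv,
    periods_image_eq_singleton_zero
      (periods_image_eq_singleton_zero hV swap.toAddEquiv) e.toAddEquiv,
    (nonempty_graphOn_univ_equiv _).map (e.toEquiv.image _).symm.trans,
    (nonempty_graphOn_univ_equiv _).map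
      ((swap.toEquiv.image _).trans (e.toEquiv.image _)).symm.trans⟩

theorem statement4 {F : Type*} [Field F] (hF : ∃ a : F, a ≠ 0 ∧ a ≠ 1)
    (m : ℕ) (hm : 3 ≤ m) :
    ∃ U V : Set (Fin (2 * m) → F),
      IsTiling U V ∧
      IsProjective F U ∧
      affineSpan F U = ⊤ ∧ affineSpan F V = ⊤ ∧
      periods U = {0} ∧ periods V = {0} ∧
      (∀ _ : Finite F, U.ncard = Nat.card F ^ m ∧ V.ncard = Nat.card F ^ m) := by
  let b : Module.Basis (Fin m ⊕ Fin m) F (Fin (2 * m) → F) :=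
    (Pi.basisFun F _).reindex ((finCongr (two_mul m)).trans finSumFinEquiv.symm)
  obtain ⟨U, V, htiling, hproj, hU, hV, hperU, hperV, ⟨eU⟩, ⟨eV⟩⟩ :=
    statement4_general hF b (by simpa using hm)
  have hcard : Nat.card (Fin m →₀ F) = Nat.card F ^ m := by
    rw [Nat.card_congr Finsupp.equivFunOnFinite]
    simp [Nat.card_fun]
  exact ⟨U, V, htiling, hproj, hU, hV, hperU, hperV,
    fun _ => ⟨(Nat.card_congr eU).trans hcard, (Nat.card_congr eV).trans hcard⟩⟩
end

section
/- Let q ≥ 3 be a prime power, let m ≥ 3 be an integer, and let n = (q^m − 1)/(q − 1). Then there exists a 1-perfect code C in F_q^n that is full-rank (the affine span of C equals F_q^n) and whose kernel ker(C) has F_q-dimension n − 2m. -/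
/-- The radius-1 Hamming ball centered at 0: vectors with at most one nonzero coordinate. -/
def hammingBall1 (F : Type*) [Zero F] (N : ℕ) : Set (Fin N → F) :=
  {c | {j | c j ≠ 0}.Subsingleton}

/-- The kernel of `X` (as a set): vectors all of whose scalar multiples are periods of `X`.
This is the maximal `F`-subspace contained in `periods X`. -/
def kerSet (F : Type*) {S : Type*} [Field F] [AddCommGroup S] [Module F S]
    (X : Set S) : Set S :=
  {w | ∀ a : F, a • w ∈ periods X}

/-- The dimension of the kernel of `X` (the kernel set is a subspace, so spanning it
does not change it). -/
noncomputable def kerDim (F : Type*) {S : Type*} [Field F] [AddCommGroup S] [Module F S]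
    (X : Set S) : ℕ :=
  Module.finrank F (Submodule.span F (kerSet F X))

/-!
The code is the preimage under a linear map of a tile. A system of representatives `X` of the
projective points of `F ^ m` makes `u ↦ ∑ p, u p • X p` a bijection from the Hamming ball onto
`F ^ m`. If `f : F ^ m → F ^ m` commutes with scalars, the columns `(X p, f (X p))` therefore
define a linear map `H : F ^ n → F ^ m × F ^ m` that sends the ball bijectively onto the graph of
`f`. Whenever that graph and a set `D` tile `F ^ m × F ^ m`, the ball and `H ⁻¹' D` tile `F ^ n`.

For `D` take the transposed graph of the coordinatewise indicator `g` of zero. As `g` cannot tell a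
vector from its multiple by a scalar `c ∉ {0, 1}`, comparing the two shows that `D` has full affine
span and trivial kernel. The tiling condition is that `x ↦ x + g (y - f x)` is bijective for
every `y`; for this it is enough that no two distinct `x`, `x'` have `f x i ≠ f x' i` at all
coordinates `i` with `x i ≠ x' i`. If moreover the graph of `f` spans, then `H` is surjective, and
`H ⁻¹' D` has full affine span and kernel `ker H`, of codimension `2 m`.
-/

section Tiling

theorem IsTiling.preimage {S T G : Type*} [AddCommGroup S] [AddCommGroup T] [FunLike G S T]
    [AddMonoidHomClass G S T] {f : G} {U : Set S} {U' V : Set T} (hf : Set.BijOn f U U')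
    (h : IsTiling U' V) : IsTiling U (f ⁻¹' V) := by
  intro s
  obtain ⟨⟨u', v'⟩, ⟨hu', hv', hsum⟩, huniq⟩ := h (f s)
  obtain ⟨u, hu, rfl⟩ := hf.surjOn hu'
  refine ⟨(u, s - u), ⟨hu, ?_, add_sub_cancel u s⟩, ?_⟩
  · rwa [Set.mem_preimage, map_sub, ← hsum, add_sub_cancel_left]
  · rintro ⟨w, c⟩ ⟨hw, hc, rfl⟩
    have hpair := huniq (f w, f c) ⟨hf.mapsTo hw, hc, (map_add f w c).symm⟩
    obtain rfl := hf.injOn hw hu (congrArg Prod.fst hpair)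
    simp

theorem isTiling_graph_of_bijective {A B : Type*} [AddCommGroup A] [AddCommGroup B]
    {f : A → B} {g : B → A} (h : ∀ b, Function.Bijective fun x => x + g (b - f x)) :
    IsTiling {p : A × B | p.2 = f p.1} {p : A × B | p.1 = g p.2} := by
  rintro ⟨a, b⟩
  obtain ⟨x, rfl⟩ := (h b).surjective a
  refine ⟨((x, f x), (g (b - f x), b - f x)), ⟨rfl, rfl, by simp⟩, ?_⟩
  rintro ⟨⟨x', y'⟩, ⟨a', b'⟩⟩ ⟨hy', ha', hsum⟩
  obtain rfl : y' = f x' := hy'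
  obtain rfl : a' = g b' := ha'
  obtain ⟨hfst, hsnd⟩ : x' + g b' = x + g (b - f x) ∧ f x' + b' = b := Prod.ext_iff.1 hsum
  obtain rfl := eq_sub_of_add_eq' hsnd
  obtain rfl := (h b).injective hfst
  rfl

end Tiling

section Kernel

theorem mem_periods_iff {S : Type*} [AddCommGroup S] {X : Set S} {w : S} :
    w ∈ periods X ↔ ∀ v, v + w ∈ X ↔ v ∈ X := by
  rw [periods, Set.mem_ofPred_eq, Set.image_add_right, Set.ext_iff,
    (Equiv.addRight w).surjective.forall]
  simp [iff_comm]

variable {F S T : Type*} [Field F] [AddCommGroup S] [Module F S] [AddCommGroup T] [Module F T]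

theorem mem_kerSet_iff {X : Set S} {w : S} :
    w ∈ kerSet F X ↔ ∀ (a : F) (v : S), v + a • w ∈ X ↔ v ∈ X := by
  simp only [kerSet, Set.mem_ofPred_eq, mem_periods_iff]

theorem kerSet_preimage {f : S →ₗ[F] T} (hf : Function.Surjective f) (V : Set T) :
    kerSet F (f ⁻¹' V) = f ⁻¹' kerSet F V := by
  ext w
  simp only [Set.mem_preimage, mem_kerSet_iff, map_add, map_smul, hf.forall]

theorem kerDim_preimage_add_finrank [FiniteDimensional F S] {f : S →ₗ[F] T}
    (hf : Function.Surjective f) {V : Set T} (hV : kerSet F V = {0}) :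
    kerDim F (f ⁻¹' V) + Module.finrank F T = Module.finrank F S := by
  have hker : kerSet F (f ⁻¹' V) = LinearMap.ker f := by
    rw [kerSet_preimage hf, hV]
    rfl
  rw [kerDim, hker, Submodule.span_eq, ← f.finrank_range_add_finrank_ker,
    LinearMap.range_eq_top.2 hf, finrank_top, add_comm]

theorem affineSpan_preimage_eq_top {f : S →ₗ[F] T} (hf : Function.Surjective f) {V : Set T}
    (hV : affineSpan F V = ⊤) : affineSpan F (f ⁻¹' V) = ⊤ := by
  have hne : (f ⁻¹' V).Nonempty :=
    (AffineSubspace.nonempty_of_affineSpan_eq_top F T T hV).preimage hf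
  rw [AffineSubspace.affineSpan_eq_top_iff_vectorSpan_eq_top_of_nonempty F S S hne]
  have hker : LinearMap.ker f ≤ vectorSpan F (f ⁻¹' V) := by
    intro k hk
    obtain ⟨c, hc⟩ := hne
    have hck : c + k ∈ f ⁻¹' V := by
      rwa [Set.mem_preimage, map_add, LinearMap.mem_ker.1 hk, add_zero]
    simpa using vsub_mem_vectorSpan F hck hc
  have hmap : (vectorSpan F (f ⁻¹' V)).map f = ⊤ := by
    have himage := f.toAffineMap.map_vectorSpan (s := f ⁻¹' V)
    simp only [LinearMap.toAffineMap_linear, LinearMap.coe_toAffineMap,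
      Set.image_preimage_eq V hf] at himage
    rw [himage, AffineSubspace.vectorSpan_eq_top_of_affineSpan_eq_top F T T hV]
  rw [← Submodule.comap_map_eq_self hker, hmap, Submodule.comap_top]

end Kernel

section HammingBall

theorem mem_hammingBall1_iff {F : Type*} [Zero F] {n : ℕ} {u : Fin n → F} :
    u ∈ hammingBall1 F n ↔ u = 0 ∨ ∃ p, ∃ a ≠ 0, u = Pi.single p a := by
  constructor
  · intro hu
    refine or_iff_not_imp_left.2 fun hne => ?_
    obtain ⟨p, hp⟩ := Function.ne_iff.1 hne
    refine ⟨p, u p, hp, funext fun j => ?_⟩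
    obtain rfl | hj := eq_or_ne j p
    · rw [Pi.single_eq_same]
    · rw [Pi.single_eq_of_ne hj]
      exact not_not.1 fun huj => hj (hu huj hp)
  · rintro (rfl | ⟨p, a, -, rfl⟩)
    · exact fun i hi => absurd rfl hi
    · intro i hi j hj
      have eq_p {k : Fin n} (hk : (Pi.single p a : Fin n → F) k ≠ 0) : k = p :=
        not_not.1 fun hkp => hk (Pi.single_eq_of_ne hkp _)
      exact (eq_p hi).trans (eq_p hj).symm

variable {F M N : Type*} [Field F] [AddCommGroup M] [Module F M] [AddCommGroup N] [Module F N]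
  {n : ℕ}

open scoped LinearAlgebra.Projectivization in
theorem bijOn_linearCombination_rep (e : Fin n ≃ ℙ F M) :
    Set.BijOn (Fintype.linearCombination F fun p => (e p).rep) (hammingBall1 F n) Set.univ := by
  have eq_of_smul_rep_eq {p p' : Fin n} {a a' : F} (ha : a ≠ 0)
      (h : a • (e p).rep = a' • (e p').rep) : p = p' := by
    rw [← e.injective.eq_iff, ← (e p).mk_rep, ← (e p').mk_rep, Projectivization.mk_eq_mk_iff']
    exact ⟨a⁻¹ * a', by rw [mul_smul, ← h, inv_smul_smul₀ ha]⟩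
  refine ⟨Set.mapsTo_univ _ _, ?_, ?_⟩
  · intro u hu u' hu' h
    obtain rfl | ⟨p, a, ha, rfl⟩ := mem_hammingBall1_iff.1 hu <;>
    obtain rfl | ⟨p', a', ha', rfl⟩ := mem_hammingBall1_iff.1 hu'
    · rfl
    · exact absurd h (by simp [(smul_ne_zero ha' (e p').rep_nonzero).symm])
    · exact absurd h (by simp [ha, (e p).rep_nonzero])
    · simp only [Fintype.linearCombination_apply_single] at h
      obtain rfl := eq_of_smul_rep_eq ha h
      rw [smul_left_injective F (e p).rep_nonzero h]
  · intro x _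
    by_cases hx : x = 0
    · exact ⟨0, mem_hammingBall1_iff.2 (.inl rfl), by rw [map_zero, hx]⟩
    · obtain ⟨a, ha⟩ := Projectivization.exists_smul_eq_mk_rep F x hx
      refine ⟨Pi.single (e.symm (.mk F x hx)) ↑a⁻¹,
        mem_hammingBall1_iff.2 (.inr ⟨_, _, a⁻¹.ne_zero, rfl⟩), ?_⟩
      rw [Fintype.linearCombination_apply_single, e.apply_symm_apply, ← ha]
      exact inv_smul_smul a x

open scoped LinearAlgebra.Projectivization in
theorem exists_bijOn_linearCombination_univ [Finite F] [Finite M]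
    (hn : n = (Nat.card M - 1) / (Nat.card F - 1)) :
    ∃ X : Fin n → M,
      Set.BijOn (Fintype.linearCombination F X) (hammingBall1 F n) Set.univ := by
  have hcard : Nat.card (ℙ F M) = n := by rw [Projectivization.card'', hn]
  exact ⟨_, bijOn_linearCombination_rep (Finite.equivFinOfCardEq hcard).symm⟩

theorem bijOn_linearCombination_graph {X : Fin n → M} {f : M → N}
    (hX : Set.BijOn (Fintype.linearCombination F X) (hammingBall1 F n) Set.univ)
    (hf : ∀ (a : F) x, f (a • x) = a • f x) :
    Set.BijOn (Fintype.linearCombination F fun p => (X p, f (X p))) (hammingBall1 F n)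
      {p : M × N | p.2 = f p.1} := by
  have hgraph : Set.BijOn (fun x => (x, f x)) Set.univ {p : M × N | p.2 = f p.1} :=
    ⟨fun _ _ => rfl, fun _ _ _ _ h => congrArg Prod.fst h,
      fun p hp => ⟨p.1, trivial, Prod.ext rfl hp.symm⟩⟩
  refine (hgraph.comp hX).congr fun u hu => ?_
  obtain rfl | ⟨p, a, -, rfl⟩ := mem_hammingBall1_iff.1 hu
  · have hf0 : f 0 = 0 := by simpa using hf 0 0
    simp [hf0]
  · simp [Fintype.linearCombination_apply_single, hf]

end HammingBall

theorem eq_top_of_forall_single_one_mem {F ι : Type*} [Semiring F] [Finite ι] [DecidableEq ι]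
    {V : Submodule F (ι → F)} (hV : ∀ i, Pi.single i 1 ∈ V) : V = ⊤ := by
  rw [eq_top_iff, ← (Pi.basisFun F ι).span_eq, Submodule.span_le]
  rintro _ ⟨i, rfl⟩
  simpa using hV i

theorem span_forall_ne_zero_eq_top {F ι : Type*} [Field F] [Finite ι] [Nontrivial Fˣ] :
    Submodule.span F {x : ι → F | ∀ i, x i ≠ 0} = ⊤ := by
  classical
  obtain ⟨c, hc⟩ := exists_ne (1 : Fˣ)
  have hc1 : (c : F) - 1 ≠ 0 := sub_ne_zero.2 (Units.val_eq_one.not.2 hc)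
  refine eq_top_of_forall_single_one_mem fun i => ?_
  rw [← Submodule.smul_mem_iff _ hc1]
  have hupdate : (Function.update 1 i c : ι → F) - 1 = ((c : F) - 1) • Pi.single i 1 := by
    ext j
    obtain rfl | hj := eq_or_ne j i <;> simp [*]
  rw [← hupdate]
  refine Submodule.sub_mem _ (Submodule.subset_span fun j => ?_)
    (Submodule.subset_span fun _ => one_ne_zero)
  obtain rfl | hj := eq_or_ne j i <;> simp [*]

theorem eq_top_of_comap_inl_of_comap_inr {F M N : Type*} [Semiring F] [AddCommMonoid M]
    [AddCommMonoid N] [Module F M] [Module F N] {V : Submodule F (M × N)}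
    (hinl : V.comap (LinearMap.inl F M N) = ⊤) (hinr : V.comap (LinearMap.inr F M N) = ⊤) :
    V = ⊤ := by
  rw [eq_top_iff, ← LinearMap.sup_range_inl_inr, sup_le_iff, LinearMap.range_le_iff_comap,
    LinearMap.range_le_iff_comap]
  exact ⟨hinl, hinr⟩

section ZeroIndicator

variable {F ι : Type*} [Field F] [DecidableEq F]

/-- The coordinatewise indicator of zero: entry `i` is `1` if `y i = 0` and `0` otherwise. Its
transposed graph `{p | p.1 = zeroIndicator p.2}` is the tile whose preimage is the code. -/
def zeroIndicator (y : ι → F) : ι → F := fun i => if y i = 0 then 1 else 0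

theorem zeroIndicator_zero_sub_single [DecidableEq ι] (i : ι) {c : F} (hc : c ≠ 0) :
    zeroIndicator (0 : ι → F) - zeroIndicator (Pi.single i c) = Pi.single i 1 := by
  ext j
  obtain rfl | hj := eq_or_ne j i <;> simp [zeroIndicator, *]

variable [Nontrivial Fˣ]

theorem affineSpan_zeroIndicator_graph [Finite ι] :
    affineSpan F {p : (ι → F) × (ι → F) | p.1 = zeroIndicator p.2} = ⊤ := by
  classical
  have hne : {p : (ι → F) × (ι → F) | p.1 = zeroIndicator p.2}.Nonempty :=
    ⟨(zeroIndicator 0, 0), rfl⟩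
  rw [AffineSubspace.affineSpan_eq_top_iff_vectorSpan_eq_top_of_nonempty F _ _ hne]
  set V := vectorSpan F {p : (ι → F) × (ι → F) | p.1 = zeroIndicator p.2}
  have hdiff (y : ι → F) : (zeroIndicator 0 - zeroIndicator y, -y) ∈ V := by
    simpa using vsub_mem_vectorSpan F
      (show (zeroIndicator 0, 0) ∈ {p : (ι → F) × (ι → F) | p.1 = zeroIndicator p.2} from rfl)
      (show (zeroIndicator y, y) ∈ {p : (ι → F) × (ι → F) | p.1 = zeroIndicator p.2} from rfl)
  have hsingle (i : ι) {c : F} (hc : c ≠ 0) : (Pi.single i 1, -Pi.single i c) ∈ V :=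
    zeroIndicator_zero_sub_single i hc ▸ hdiff (Pi.single i c)
  have hinr : V.comap (LinearMap.inr F _ _) = ⊤ := by
    obtain ⟨c, hc⟩ := exists_ne (1 : Fˣ)
    have hc1 : (c : F) - 1 ≠ 0 := sub_ne_zero.2 (Units.val_eq_one.not.2 hc)
    refine eq_top_of_forall_single_one_mem fun i => ?_
    rw [← Submodule.smul_mem_iff _ hc1]
    have := V.sub_mem (hsingle i one_ne_zero) (hsingle i c.ne_zero)
    simpa [← Pi.single_smul, ← Pi.single_sub, neg_add_eq_sub] using this
  have hinl : V.comap (LinearMap.inl F _ _) = ⊤ := by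
    refine eq_top_of_forall_single_one_mem fun i => ?_
    have hi : (0, Pi.single i 1) ∈ V := hinr.ge trivial
    simpa using V.add_mem (hsingle i one_ne_zero) hi
  exact eq_top_of_comap_inl_of_comap_inr hinl hinr

theorem kerSet_zeroIndicator_graph :
    kerSet F {p : (ι → F) × (ι → F) | p.1 = zeroIndicator p.2} = {0} := by
  refine Set.eq_singleton_iff_unique_mem.2 ⟨by simp [mem_kerSet_iff], ?_⟩
  rintro ⟨x, y⟩ hxy
  have translate_zero (a : F) : zeroIndicator 0 + a • x = zeroIndicator (a • y) := by
    simpa using (mem_kerSet_iff.1 hxy a (zeroIndicator 0, 0)).2 rfl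
  have hy : y = 0 := by
    ext i
    by_contra hyi
    have hx (a : Fˣ) : 1 + a * x i = 0 := by
      simpa [zeroIndicator, show y i ≠ 0 from hyi] using congrFun (translate_zero a) i
    obtain ⟨c, hc⟩ := exists_ne (1 : Fˣ)
    have hxi : x i ≠ 0 := fun h => by simpa [h] using hx 1
    refine hc (Units.ext (mul_right_cancel₀ hxi ?_))
    linear_combination hx c - hx 1
  subst hy
  simpa using translate_zero 1

end ZeroIndicator

section MaskedShift

variable {F : Type*} [DecidableEq F] {k : ℕ}

theorem mask_eq_zero_and_ne_zero_of_ne [Zero F] {a b c a' b' c' : F}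
    (ha : (if b = 0 then c else 0) = (if b' = 0 then c' else 0) → a = a')
    (hc : (if a = 0 then b else 0) = (if a' = 0 then b' else 0) → c = c') (hne : a ≠ a') :
    (b = 0 ∧ b' ≠ 0 ∧ c ≠ 0) ∨ (b ≠ 0 ∧ b' = 0 ∧ c' ≠ 0) := by
  by_cases hb : b = 0 <;> by_cases hb' : b' = 0
  · subst hb hb'
    exact absurd (ha (by simpa using hc (by simp))) hne
  · refine .inl ⟨hb, hb', fun hc0 => hne (ha (by simp [hb', hc0]))⟩
  · refine .inr ⟨hb, hb', fun hc0 => hne (ha (by simp [hb, hc0]))⟩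
  · exact absurd (ha (by simp [hb, hb'])) hne

theorem eq_of_cyclic_mask [Zero F] {a b c a' b' c' : F}
    (ha : (if b = 0 then c else 0) = (if b' = 0 then c' else 0) → a = a')
    (hb : (if c = 0 then a else 0) = (if c' = 0 then a' else 0) → b = b')
    (hc : (if a = 0 then b else 0) = (if a' = 0 then b' else 0) → c = c') : a = a' := by
  by_contra hne
  have hb_pattern := mask_eq_zero_and_ne_zero_of_ne ha hc hne
  have hb_ne : b ≠ b' := by grind
  have hc_pattern := mask_eq_zero_and_ne_zero_of_ne hb ha hb_ne
  have hc_ne : c ≠ c' := by grind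
  have ha_pattern := mask_eq_zero_and_ne_zero_of_ne hc hb hc_ne
  -- One of the two triples has two zeros, but a zero is always followed by a nonzero entry.
  grind

/-- Each entry of `x` is moved to the next index, but replaced by zero unless a mask entry of `x`
vanishes. The indices `0, 1, 2` form a cycle `2 → 0 → 1 → 2`, with masks `x 1`, `x 2`, `x 0`
at the targets `0`, `1`, `2`; every later target has mask `x 0`. -/
def maskedShift [Zero F] (x : Fin (k + 3) → F) : Fin (k + 3) → F :=
  Fin.cons (if x 1 = 0 then x 2 else 0) <|
    Fin.cons (if x 2 = 0 then x 0 else 0) fun i => if x 0 = 0 then x i.succ.castSucc else 0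

theorem maskedShift_zero [Zero F] (x : Fin (k + 3) → F) :
    maskedShift x 0 = if x 1 = 0 then x 2 else 0 := rfl

theorem maskedShift_one [Zero F] (x : Fin (k + 3) → F) :
    maskedShift x 1 = if x 2 = 0 then x 0 else 0 := rfl

theorem maskedShift_succ_succ [Zero F] (x : Fin (k + 3) → F) (i : Fin (k + 1)) :
    maskedShift x i.succ.succ = if x 0 = 0 then x i.succ.castSucc else 0 := rfl

theorem maskedShift_eq_iff [Zero F] {x y : Fin (k + 3) → F} : maskedShift x = y ↔
    (if x 1 = 0 then x 2 else 0) = y 0 ∧ (if x 2 = 0 then x 0 else 0) = y 1 ∧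
      ∀ i : Fin (k + 1), (if x 0 = 0 then x i.succ.castSucc else 0) = y i.succ.succ := by
  simp only [funext_iff, Fin.forall_fin_succ (n := k + 2), Fin.forall_fin_succ (n := k + 1)]
  rfl

theorem maskedShift_smul [MulZeroClass F] [NoZeroDivisors F] (a : F) (x : Fin (k + 3) → F) :
    maskedShift (a • x) = a • maskedShift x := by
  obtain rfl | ha := eq_or_ne a 0
  · simp [maskedShift_eq_iff]
  · simp [maskedShift_eq_iff, maskedShift_zero, maskedShift_one, maskedShift_succ_succ, ha]

theorem eq_of_maskedShift_eq_imp_eq [Zero F] {x x' : Fin (k + 3) → F}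
    (h : ∀ i, maskedShift x i = maskedShift x' i → x i = x' i) : x = x' := by
  have h0 : x 0 = x' 0 := eq_of_cyclic_mask (h 0) (h 1) (h 2)
  have h1 : x 1 = x' 1 := eq_of_cyclic_mask (h 1) (h 2) (h 0)
  funext i
  induction i using Fin.induction with
  | zero => exact h0
  | succ i ih =>
    cases i using Fin.cases with
    | zero => exact h1
    | succ i => exact h _ (by simp only [maskedShift_succ_succ, h0, ih])

variable [Field F]

theorem injective_add_zeroIndicator_sub_maskedShift (y : Fin (k + 3) → F) :
    Function.Injective fun x => x + zeroIndicator (y - maskedShift x) := by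
  intro x x' h
  refine eq_of_maskedShift_eq_imp_eq fun i hi => ?_
  simpa [zeroIndicator, hi] using congrFun h i

theorem span_range_maskedShift :
    Submodule.span F (Set.range (maskedShift : (Fin (k + 3) → F) → _)) = ⊤ := by
  set V := Submodule.span F (Set.range (maskedShift : (Fin (k + 3) → F) → _))
  have mem (x : Fin (k + 3) → F) : maskedShift x ∈ V := Submodule.subset_span ⟨x, rfl⟩
  have h02 : (0 : Fin (k + 3)) ≠ 2 := (Fin.succ_ne_zero 1).symm
  have h1 (i : Fin (k + 1)) : i.succ.succ ≠ 1 := (Fin.succ_injective _).ne (Fin.succ_ne_zero i)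
  have h12 : (1 : Fin (k + 3)) ≠ 2 := (h1 0).symm
  have h0 (c : F) : Pi.single 0 c ∈ V := by
    have hshift : maskedShift (Pi.single 0 1 + Pi.single 2 1 : Fin (k + 3) → F) = Pi.single 0 1 :=
      maskedShift_eq_iff.2 (by simp [h02, h12, h02.symm])
    have hmem : Pi.single 0 1 ∈ V := hshift ▸ mem _
    simpa [← Pi.single_smul] using V.smul_mem c hmem
  refine eq_top_of_forall_single_one_mem (Fin.cases (h0 1) (Fin.cases ?_ fun i => ?_))
  · have hshift : maskedShift (Pi.single 0 1 : Fin (k + 3) → F) = Pi.single 1 1 :=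
      maskedShift_eq_iff.2 (by simp [h02.symm, h1])
    exact hshift ▸ mem _
  · have hshift : maskedShift (Pi.single i.succ.castSucc 1 : Fin (k + 3) → F) =
        Pi.single i.succ.succ 1 + Pi.single 0 (if i.succ.castSucc = 2 then 1 else 0) :=
      maskedShift_eq_iff.2
        ⟨by grind [Pi.add_apply, Fin.succ_ne_zero], by simp [(h1 _).symm],
          by simp [Pi.single_apply]⟩
    exact (V.add_mem_iff_left (h0 _)).1 (hshift ▸ mem _)

theorem span_maskedShift_graph [Nontrivial Fˣ] :
    Submodule.span F {p : (Fin (k + 3) → F) × (Fin (k + 3) → F) | p.2 = maskedShift p.1} = ⊤ := by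
  set V := Submodule.span F
    {p : (Fin (k + 3) → F) × (Fin (k + 3) → F) | p.2 = maskedShift p.1}
  have mem (x : Fin (k + 3) → F) : (x, maskedShift x) ∈ V := Submodule.subset_span rfl
  have hinl : V.comap (LinearMap.inl F _ _) = ⊤ := by
    rw [eq_top_iff, ← span_forall_ne_zero_eq_top, Submodule.span_le]
    intro x hx
    have hshift : maskedShift x = 0 := by simp [maskedShift_eq_iff, hx _]
    simpa [hshift] using mem x
  have hinr : V.comap (LinearMap.inr F _ _) = ⊤ := by
    rw [eq_top_iff, ← span_range_maskedShift, Submodule.span_le]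
    rintro _ ⟨x, rfl⟩
    have hx : (x, 0) ∈ V := hinl.ge trivial
    simpa using V.sub_mem (mem x) hx
  exact eq_top_of_comap_inl_of_comap_inr hinl hinr

end MaskedShift

/-- Every finite field has prime-power cardinality `q ≥ 2`, and for every prime power `q`
there is a field of that order; so "let `q ≥ 3` be a prime power" is rendered as
quantification over finite fields `F` with `3 ≤ |F|`. -/
theorem statement6 (F : Type*) [Field F] [Fintype F] (hq : 3 ≤ Fintype.card F)
    (m : ℕ) (hm : 3 ≤ m)
    (n : ℕ) (hn : n = (Fintype.card F ^ m - 1) / (Fintype.card F - 1)) :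
    ∃ C : Set (Fin n → F),
      IsTiling (hammingBall1 F n) C ∧
      affineSpan F C = ⊤ ∧
      kerDim F C = n - 2 * m := by
  classical
  have : Nontrivial Fˣ := by
    rw [← Fintype.one_lt_card_iff_nontrivial, Fintype.card_units]
    lia
  obtain ⟨k, rfl⟩ := Nat.exists_eq_add_of_le' hm
  obtain ⟨X, hX⟩ := exists_bijOn_linearCombination_univ (F := F) (M := Fin (k + 3) → F)
    (by simpa using hn)
  have hball := bijOn_linearCombination_graph hX (maskedShift_smul (F := F))
  set H := Fintype.linearCombination F fun p => (X p, maskedShift (X p))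
  have hH : Function.Surjective H := by
    rw [← LinearMap.range_eq_top, eq_top_iff, ← span_maskedShift_graph, Submodule.span_le]
    exact hball.surjOn.trans (Set.image_subset_range _ _)
  refine ⟨H ⁻¹' {p | p.1 = zeroIndicator p.2}, ?_, ?_, ?_⟩
  · exact (isTiling_graph_of_bijective fun y => Finite.injective_iff_bijective.1
      (injective_add_zeroIndicator_sub_maskedShift y)).preimage hball
  · exact affineSpan_preimage_eq_top hH affineSpan_zeroIndicator_graph
  · have hdim := kerDim_preimage_add_finrank hH kerSet_zeroIndicator_graph
    simp only [Module.finrank_prod, Module.finrank_fin_fun] at hdim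
    lia
end
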